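/- arXiv:2104.06082 — 3 statements merged into one kernel-verified Lean document; each statement's English description precedes it below -/
import Mathlib

section
/- Let 𝕍 be a finite-dimensional real vector space with inner product α, let V ∈ 𝕍 satisfy α(V,V) < 1, let F be the Randers norm F(z) = √(α(z,z)) + α(V,z), and let W ⊂ 𝕍 be a hyperplane (a linear subspace of codimension one). Then there exist vectors n₁, n₂ ∈ 𝕍 with F(n₁) = F(n₂) = 1, lying strictly on opposite sides of W, such that α(nᵢ + √(α(nᵢ,nᵢ))·V, w) = 0 for all w ∈ W and i = 1, 2. -/
/-- A nonzero vector `ν` determines a vector `n` with Randers norm one, on the positive side of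
the `α`-orthogonal hyperplane of `ν`, which is normal to that hyperplane in the Randers sense. -/
theorem exists_randers_normal {𝕍 : Type*} [AddCommGroup 𝕍] [Module ℝ 𝕍]
    (α : 𝕍 →ₗ[ℝ] 𝕍 →ₗ[ℝ] ℝ) (hsymm : ∀ x y, α x y = α y x)
    (hpos : ∀ x, x ≠ 0 → 0 < α x x) (V : 𝕍) (hV : α V V < 1) (ν : 𝕍) (hν : ν ≠ 0) :
    ∃ n : 𝕍, Real.sqrt (α n n) + α V n = 1 ∧ 0 < α ν n ∧
      ∀ w, α ν w = 0 → α (n + Real.sqrt (α n n) • V) w = 0 := by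
  have ha := hpos ν hν
  have hD : 0 < α ν V ^ 2 + α ν ν * (1 - α V V) := by nlinarith [sq_nonneg (α ν V)]
  obtain ⟨s, hs, hs2⟩ : ∃ s : ℝ, 0 < s ∧ s ^ 2 = α ν V ^ 2 + α ν ν * (1 - α V V) :=
    ⟨_, Real.sqrt_pos.2 hD, Real.sq_sqrt hD.le⟩
  -- `m = t ν - V` has `α`-norm one
  obtain ⟨t, ht⟩ : ∃ t : ℝ, t * α ν ν = α ν V + s := ⟨(α ν V + s) / α ν ν, by field_simp⟩
  obtain ⟨m, hm⟩ : ∃ m : 𝕍, m = t • ν - V := ⟨_, rfl⟩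
  have hmm : α m m = 1 := by
    have h : α m m = t * (t * α ν ν) - 2 * t * α ν V + α V V := by
      simp [hm, hsymm V ν]
      ring
    refine mul_left_cancel₀ ha.ne' ?_
    linear_combination (α ν ν) * h + (t * α ν ν + s - α ν V) * ht + hs2
  have hνm : α ν m = s := by
    simp [hm, ht]
  have hF : 0 < 1 + α V m := by
    have h0 : 0 ≤ α (V + m) (V + m) := by
      by_cases h : V + m = 0
      · simp [h]
      · exact (hpos _ h).le
    have h : α (V + m) (V + m) = α V V + 2 * α V m + α m m := by
      simp [hsymm m V]
      ring
    linarith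
  obtain ⟨c, hc, hc1⟩ : ∃ c : ℝ, 0 < c ∧ c * (1 + α V m) = 1 :=
    ⟨(1 + α V m)⁻¹, inv_pos.2 hF, inv_mul_cancel₀ hF.ne'⟩
  have hsqrt : Real.sqrt (α (c • m) (c • m)) = c := by
    simp [hmm, Real.sqrt_mul_self hc.le]
  refine ⟨c • m, ?_, ?_, fun w hw => ?_⟩
  · rw [hsqrt, map_smul, smul_eq_mul]
    linarith
  · rw [map_smul, hνm]
    exact mul_pos hc hs
  · rw [hsqrt, hm]
    simp [hw]

/-- A hyperplane in an inner product space is the orthogonal complement of a nonzero vector. -/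
theorem exists_ker_eq_of_finrank_quotient_eq_one {𝕍 : Type*} [AddCommGroup 𝕍] [Module ℝ 𝕍]
    [FiniteDimensional ℝ 𝕍] (α : 𝕍 →ₗ[ℝ] 𝕍 →ₗ[ℝ] ℝ) (hpos : ∀ x, x ≠ 0 → 0 < α x x)
    (W : Submodule ℝ 𝕍) (hW : Module.finrank ℝ (𝕍 ⧸ W) = 1) :
    ∃ ν : 𝕍, ν ≠ 0 ∧ LinearMap.ker (α ν) = W := by
  have hinj : Function.Injective α := by
    refine (injective_iff_map_eq_zero α).2 fun x hx => ?_
    by_contra h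
    simpa [hx] using hpos x h
  have hsurj : Function.Surjective α :=
    (LinearMap.injective_iff_surjective_of_finrank_eq_finrank
      (Subspace.dual_finrank_eq (K := ℝ) (V := 𝕍)).symm).1 hinj
  let e : (𝕍 ⧸ W) ≃ₗ[ℝ] ℝ := LinearEquiv.ofFinrankEq _ _ (by simp [hW])
  obtain ⟨ν, hν⟩ := hsurj (e.toLinearMap ∘ₗ W.mkQ)
  have hker : LinearMap.ker (α ν) = W := by
    rw [hν, LinearEquiv.ker_comp, Submodule.ker_mkQ]
  refine ⟨ν, ?_, hker⟩
  rintro rfl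
  have hW' : W = ⊤ := by rw [← hker, map_zero, LinearMap.ker_zero]
  have : Subsingleton (𝕍 ⧸ W) := Submodule.Quotient.subsingleton_iff.2 hW'
  rw [Module.finrank_zero_of_subsingleton] at hW
  exact zero_ne_one hW

/-- for the Randers norm F(z) = √(α(z,z)) + α(V,z) on a
finite-dimensional real vector space with inner product α and α(V,V) < 1, and
any hyperplane W (codimension-one linear subspace), there exist vectors n₁, n₂
with F(n₁) = F(n₂) = 1, lying strictly on opposite sides of W, such that
α(nᵢ + √(α(nᵢ,nᵢ))·V, w) = 0 for all w ∈ W, i = 1, 2. -/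
theorem randers_normals_to_hyperplane
    (𝕍 : Type*) [AddCommGroup 𝕍] [Module ℝ 𝕍] [FiniteDimensional ℝ 𝕍]
    (α : 𝕍 →ₗ[ℝ] 𝕍 →ₗ[ℝ] ℝ)
    (hsymm : ∀ x y, α x y = α y x)
    (hpos : ∀ x, x ≠ 0 → 0 < α x x)
    (V : 𝕍) (hV : α V V < 1)
    (F : 𝕍 → ℝ) (hF : ∀ z, F z = Real.sqrt (α z z) + α V z)
    (W : Submodule ℝ 𝕍) (hW : Module.finrank ℝ (𝕍 ⧸ W) = 1) :
    ∃ (n₁ n₂ : 𝕍) (φ : 𝕍 →ₗ[ℝ] ℝ),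
      LinearMap.ker φ = W ∧
      F n₁ = 1 ∧ F n₂ = 1 ∧
      0 < φ n₁ ∧ φ n₂ < 0 ∧
      (∀ w ∈ W, α (n₁ + Real.sqrt (α n₁ n₁) • V) w = 0) ∧
      (∀ w ∈ W, α (n₂ + Real.sqrt (α n₂ n₂) • V) w = 0) := by
  obtain ⟨ν, hν, hker⟩ := exists_ker_eq_of_finrank_quotient_eq_one α hpos W hW
  obtain ⟨n₁, h₁, p₁, o₁⟩ := exists_randers_normal α hsymm hpos V hV ν hν
  obtain ⟨n₂, h₂, p₂, o₂⟩ := exists_randers_normal α hsymm hpos V hV (-ν) (neg_ne_zero.2 hν)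
  have hmem : ∀ w ∈ W, α ν w = 0 := fun w hw => by
    rwa [← hker, LinearMap.mem_ker] at hw
  refine ⟨n₁, n₂, α ν, hker, (hF n₁).trans h₁, (hF n₂).trans h₂, p₁, by simpa using p₂,
    fun w hw => o₁ w (hmem w hw), fun w hw => o₂ w (by simp [hmem w hw])⟩
end

section
/- Let 𝔤 be a finite-dimensional real Lie algebra with Killing form K(X,Y) = trace(ad X ∘ ad Y), let α be an inner product on 𝔤, let V ∈ 𝔤 satisfy α(V,V) < 1, and let F(z) = √(α(z,z)) + α(V,z) be the associated Randers norm. If y ∈ 𝔤 is nonzero, K(y,y) ≠ 0, and y is a critical point of the function f(z) = K(z,z)/F(z)² on 𝔤∖{0} (i.e., the derivative of t ↦ f(y+tw) at t = 0 vanishes for every w ∈ 𝔤), then y is a geodesic vector for (α, V). -/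
/-- A nonzero `X` is a geodesic vector for the data `(α, V)` of a left-invariant
Randers metric if `α (X + √(α X X) • V) ⁅X, U⁆ = 0` for all `U`. -/
def IsGeodesicVector {L : Type*} [LieRing L] [LieAlgebra ℝ L]
    (α : L →ₗ[ℝ] L →ₗ[ℝ] ℝ) (V X : L) : Prop :=
  X ≠ 0 ∧ ∀ U : L, α (X + Real.sqrt (α X X) • V) ⁅X, U⁆ = 0

/-- The Killing form K(X,Y) = trace(ad X ∘ ad Y) of a real Lie algebra. -/
noncomputable def killing (L : Type*) [LieRing L] [LieAlgebra ℝ L] (X Y : L) : ℝ :=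
  LinearMap.trace ℝ L (LieAlgebra.ad ℝ L X ∘ₗ LieAlgebra.ad ℝ L Y)

/-- The derivative at `0` of a symmetric bilinear form evaluated along an affine line. -/
theorem hasDerivAt_bilin_line {E : Type*} [AddCommGroup E] [Module ℝ E]
    (B : E →ₗ[ℝ] E →ₗ[ℝ] ℝ) (hB : ∀ x y, B x y = B y x) (y w : E) :
    HasDerivAt (fun t : ℝ => B (y + t • w) (y + t • w)) (2 * B y w) 0 := by
  have hexp : (fun t : ℝ => B (y + t • w) (y + t • w)) =
      fun t : ℝ => B y y + t * (2 * B y w) + t ^ 2 * B w w := by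
    funext t
    simp only [map_add, map_smul, LinearMap.add_apply, LinearMap.smul_apply, smul_eq_mul, hB w y]
    ring
  rw [hexp]
  have h := (((hasDerivAt_id (0 : ℝ)).mul_const (2 * B y w)).const_add (B y y)).fun_add
    (((hasDerivAt_id (0 : ℝ)).pow 2).mul_const (B w w))
  simpa using h

/-- The derivative at `0` of a linear form evaluated along an affine line. -/
theorem hasDerivAt_linear_line {E : Type*} [AddCommGroup E] [Module ℝ E]
    (f : E →ₗ[ℝ] ℝ) (y w : E) :
    HasDerivAt (fun t : ℝ => f (y + t • w)) (f w) 0 := by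
  have hexp : (fun t : ℝ => f (y + t • w)) = fun t : ℝ => f y + t * f w := by
    funext t
    simp
  rw [hexp]
  simpa using ((hasDerivAt_id (0 : ℝ)).mul_const (f w)).const_add (f y)

/-- A Randers norm is positive on nonzero vectors. -/
theorem randers_pos {E : Type*} [AddCommGroup E] [Module ℝ E]
    (α : E →ₗ[ℝ] E →ₗ[ℝ] ℝ) (hsymm : ∀ x y, α x y = α y x)
    (hpos : ∀ x, x ≠ 0 → 0 < α x x) {V : E} (hV : α V V < 1) {y : E} (hy : y ≠ 0) :
    0 < Real.sqrt (α y y) + α V y := by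
  have hnonneg : ∀ x, 0 ≤ α x x := fun x => by
    rcases eq_or_ne x 0 with rfl | hx
    · simp
    · exact (hpos x hx).le
  have hcs : α V y ^ 2 ≤ α V V * α y y :=
    LinearMap.BilinForm.apply_sq_le_of_symm α hnonneg ⟨hsymm⟩ V y
  have hlt : |α V y| < Real.sqrt (α y y) := by
    rw [← Real.sqrt_sq_eq_abs]
    exact Real.sqrt_lt_sqrt (sq_nonneg _) (by nlinarith [hpos y hy])
  linarith [neg_abs_le (α V y)]

/-- The Killing form satisfies `K(y, [y, u]) = 0`. -/
theorem killingForm_apply_lie_self {L : Type*} [LieRing L] [LieAlgebra ℝ L] (y u : L) :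
    killingForm ℝ L y ⁅y, u⁆ = 0 := by
  rw [← LieModule.traceForm_apply_lie_apply, lie_self, map_zero, LinearMap.zero_apply]

/-- if y is nonzero, K(y,y) ≠ 0 and y is a critical point of
f(z) = K(z,z)/F(z)² on 𝔤∖{0} (all directional derivatives at y vanish), where
F is the Randers norm of (α, V), then y is a geodesic vector for (α, V). -/
theorem geodesic_vector_of_critical_point
    (L : Type*) [LieRing L] [LieAlgebra ℝ L] [FiniteDimensional ℝ L]
    (α : L →ₗ[ℝ] L →ₗ[ℝ] ℝ)
    (hsymm : ∀ x y, α x y = α y x)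
    (hpos : ∀ x, x ≠ 0 → 0 < α x x)
    (V : L) (hV : α V V < 1)
    (F : L → ℝ) (hF : ∀ z, F z = Real.sqrt (α z z) + α V z)
    (y : L) (hy : y ≠ 0) (hKy : killing L y y ≠ 0)
    (hcrit : ∀ w : L,
      deriv (fun t : ℝ => killing L (y + t • w) (y + t • w) / (F (y + t • w)) ^ 2) 0 = 0) :
    IsGeodesicVector α V y := by
  refine ⟨hy, fun U => ?_⟩
  set w := ⁅y, U⁆ with hw
  have hFy : F y ≠ 0 := by
    rw [hF]
    exact (randers_pos α hsymm hpos hV hy).ne'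
  have hK : HasDerivAt (fun t : ℝ => killing L (y + t • w) (y + t • w)) 0 0 := by
    have h := hasDerivAt_bilin_line (killingForm ℝ L) (LieModule.traceForm_comm ℝ L L) y w
    rwa [hw, killingForm_apply_lie_self, mul_zero] at h
  have hα : α y y ≠ 0 := (hpos y hy).ne'
  have hFd : HasDerivAt (fun t : ℝ => F (y + t • w))
      (2 * α y w / (2 * Real.sqrt (α y y)) + α V w) 0 := by
    simp only [hF]
    have h := (hasDerivAt_bilin_line α hsymm y w).sqrt (by simpa using hα)
    simpa using h.fun_add (hasDerivAt_linear_line (α V) y w)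
  have hquot := (hK.div (hFd.pow 2) (by simpa using hFy)).deriv.symm.trans (hcrit w)
  have hs : Real.sqrt (α y y) ≠ 0 := (Real.sqrt_pos.mpr (hpos y hy)).ne'
  have hzero : 2 * α y w / (2 * Real.sqrt (α y y)) + α V w = 0 := by
    simpa [hFy, hKy] using hquot
  field_simp at hzero
  simp only [map_add, map_smul, LinearMap.add_apply, LinearMap.smul_apply, smul_eq_mul]
  linarith
end

section
/- Let 𝔤 be a finite-dimensional real Lie algebra whose Killing form K(X,Y) = trace(ad X ∘ ad Y) is indefinite (there exist vectors Y₊, Y₋ ∈ 𝔤 with K(Y₊,Y₊) > 0 and K(Y₋,Y₋) < 0), let α be an inner product on 𝔤 and let V ∈ 𝔤 satisfy α(V,V) < 1. Then there exist at least four geodesic vectors X₁, X₂, X₃, X₄ for (α, V) such that no one of them is a positive scalar multiple of another. -/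
open Filter Topology

/-- A splitting of a real vector space into a positive definite and a negative semidefinite
subspace which are orthogonal for the bilinear form `B`. -/
structure IsPosSplitting {E : Type*} [AddCommGroup E] [Module ℝ E]
    (B : LinearMap.BilinForm ℝ E) (A N : Submodule ℝ E) : Prop where
  pos : ∀ a ∈ A, a ≠ 0 → 0 < B a a
  nonpos : ∀ z ∈ N, B z z ≤ 0
  ortho : ∀ a ∈ A, ∀ z ∈ N, B a z = 0
  sup_eq_top : A ⊔ N = ⊤

theorem exists_isPosSplitting {E : Type*} [AddCommGroup E] [Module ℝ E] [FiniteDimensional ℝ E]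
    (B : LinearMap.BilinForm ℝ E) (hB : B.IsSymm) :
    ∃ A N : Submodule ℝ E, IsPosSplitting B A N := by
  obtain ⟨A, hA, hmax⟩ := WellFounded.has_min
    (wellFounded_gt (α := Submodule ℝ E)) {A | ∀ a ∈ A, a ≠ 0 → 0 < B a a}
    ⟨⊥, fun a ha h => absurd ((Submodule.mem_bot ℝ).1 ha) h⟩
  have hortho : ∀ a ∈ A, ∀ z ∈ B.orthogonal A, B a z = 0 := fun a ha z hz =>
    (LinearMap.BilinForm.mem_orthogonal_iff.1 hz) a ha
  refine ⟨A, B.orthogonal A, hA, ?_, hortho, ?_⟩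
  · intro z hz
    by_contra! hzz
    have hlarge : A ⊔ Submodule.span ℝ {z} ∈ {A : Submodule ℝ E | ∀ a ∈ A, a ≠ 0 → 0 < B a a} := by
      intro x hx hx0
      obtain ⟨a, ha, y, hy, rfl⟩ := Submodule.mem_sup.1 hx
      obtain ⟨t, rfl⟩ := Submodule.mem_span_singleton.1 hy
      have h1 := hortho a ha z hz
      have h2 : B z a = 0 := by rw [hB.eq]; exact h1
      have hval : B (a + t • z) (a + t • z) = B a a + t ^ 2 * B z z := by
        simp [h1, h2]; ring
      rw [hval]
      by_cases ha0 : a = 0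
      · subst ha0
        have ht : t ≠ 0 := by rintro rfl; simp at hx0
        simp only [map_zero, zero_add]
        positivity
      · have := hA a ha ha0
        positivity
    have hzA : z ∈ A := by
      by_contra hzA
      refine hmax _ hlarge (lt_of_le_of_ne le_sup_left fun h => hzA ?_)
      rw [h]
      exact Submodule.mem_sup_right (Submodule.mem_span_singleton_self z)
    exact hzz.ne' (hortho z hzA z hz)
  · refine (B.isCompl_orthogonal_of_restrict_nondegenerate hB.isRefl
      (B.nondegenerate_restrict_of_disjoint_orthogonal hB.isRefl
        (Submodule.disjoint_def.2 fun x hx hx' => ?_))).sup_eq_top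
    by_contra hx0
    exact (hA x hx hx0).ne' (hortho x hx x hx')

section Randers

variable {E : Type*} [NormedAddCommGroup E] [InnerProductSpace ℝ E]

/-- The Randers norm `‖x‖ + ⟪V, x⟫`. -/
noncomputable def randers (V x : E) : ℝ := ‖x‖ + inner ℝ V x

/-- The quotient of a quadratic form by the square of the Randers norm. -/
noncomputable def randersQuotient (B : LinearMap.BilinForm ℝ E) (V x : E) : ℝ :=
  B x x / randers V x ^ 2

theorem le_randers (V x : E) : (1 - ‖V‖) * ‖x‖ ≤ randers V x := by
  have := (abs_le.1 (abs_real_inner_le_norm V x)).1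
  unfold randers
  linarith

theorem randers_pos_s19 {V x : E} (hV : ‖V‖ < 1) (hx : x ≠ 0) : 0 < randers V x :=
  (mul_pos (sub_pos.2 hV) (norm_pos_iff.2 hx)).trans_le (le_randers V x)

theorem randersQuotient_smul (B : LinearMap.BilinForm ℝ E) (V x : E) {t : ℝ} (ht : 0 < t) :
    randersQuotient B V (t • x) = randersQuotient B V x := by
  have h : randers V (t • x) = t * randers V x := by
    simp [randers, norm_smul, inner_smul_right, abs_of_pos ht]; ring
  simp only [randersQuotient, h, map_smul, LinearMap.smul_apply, smul_eq_mul, mul_pow]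
  rw [← mul_assoc, ← sq, mul_div_mul_left _ _ (by positivity)]

theorem randersQuotient_mul_sq (B : LinearMap.BilinForm ℝ E) {V x : E} (hV : ‖V‖ < 1)
    (hx : x ≠ 0) : randersQuotient B V x * randers V x ^ 2 = B x x :=
  div_mul_cancel₀ _ (pow_pos (randers_pos_s19 hV hx) 2).ne'

theorem randers_add_lt {V x y : E} (h : ¬SameRay ℝ x y) :
    randers V (x + y) < randers V x + randers V y := by
  have := norm_add_lt_of_not_sameRay h
  simp only [randers, inner_add_right]
  linarith

theorem fderiv_randersQuotient_eq_zero_of_isMax (B : LinearMap.BilinForm ℝ E) {V x : E}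
    (hx : x ≠ 0) (hmax : ∀ y, y ≠ 0 → randersQuotient B V y ≤ randersQuotient B V x) :
    fderiv ℝ (randersQuotient B V) x = 0 :=
  IsLocalMax.fderiv_eq_zero <| by
    filter_upwards [isOpen_ne.mem_nhds hx] with y hy using hmax y hy

theorem contDiffAt_randers (V : E) {x : E} (hx : x ≠ 0) : ContDiffAt ℝ 1 (randers V) x :=
  (contDiffAt_norm ℝ hx).add (contDiffAt_const.inner ℝ contDiffAt_id)

theorem norm_mul_fderiv_randers (V : E) {x : E} (hx : x ≠ 0) (w : E) :
    ‖x‖ * fderiv ℝ (randers V) x w = inner ℝ (x + ‖x‖ • V) w := by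
  have hn : HasFDerivAt (fun y : E => ‖y‖) (fderiv ℝ (fun y : E => ‖y‖) x) x :=
    ((contDiffAt_norm (n := 1) ℝ hx).differentiableAt one_ne_zero).hasFDerivAt
  have hsq := congrArg (fun D => D w)
    ((hn.pow 2).unique (hasStrictFDerivAt_norm_sq x).hasFDerivAt)
  have hi : HasFDerivAt (fun y : E => inner ℝ V y) (innerSL ℝ V) x := (innerSL ℝ V).hasFDerivAt
  have hR : HasFDerivAt (randers V) _ x := hn.add hi
  rw [hR.fderiv]
  simp at hsq
  simp [inner_add_left, inner_smul_left]
  linarith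

namespace IsPosSplitting

variable {B : LinearMap.BilinForm ℝ E} {A N : Submodule ℝ E} {V : E}

theorem left_eq_of_add_eq (h : IsPosSplitting B A N) {a a' z z' : E} (ha : a ∈ A) (ha' : a' ∈ A)
    (hz : z ∈ N) (hz' : z' ∈ N) (heq : a + z = a' + z') : a = a' := by
  by_contra hne
  have h1 : a - a' = z' - z := by
    rw [sub_eq_sub_iff_add_eq_add, heq, add_comm]
  have h2 := h.pos (a - a') (A.sub_mem ha ha') (sub_ne_zero.2 hne)
  have h3 := h.nonpos (z' - z) (N.sub_mem hz' hz)
  rw [h1] at h2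
  exact h2.not_ge h3

theorem add_ne_zero (h : IsPosSplitting B A N) {a z : E} (ha : a ∈ A) (ha0 : a ≠ 0) (hz : z ∈ N) :
    a + z ≠ 0 := fun h0 =>
  ha0 (h.left_eq_of_add_eq ha A.zero_mem hz N.zero_mem (by simpa using h0))

theorem apply_add (h : IsPosSplitting B A N) (hB : B.IsSymm) {a a' z z' : E} (ha : a ∈ A)
    (ha' : a' ∈ A) (hz : z ∈ N) (hz' : z' ∈ N) : B (a + z) (a' + z') = B a a' + B z z' := by
  simp [h.ortho a ha z' hz', hB.eq z a', h.ortho a' ha' z hz]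

theorem mul_norm_sq_le (h : IsPosSplitting B A N) (hB : B.IsSymm) (hV : ‖V‖ < 1) {c : ℝ}
    (hc : 0 < c) {a z : E} (ha : a ∈ A) (ha0 : a ≠ 0) (hz : z ∈ N)
    (hle : c ≤ randersQuotient B V (a + z)) :
    c * ((1 - ‖V‖) * ‖a + z‖) ^ 2 ≤ B a a := by
  have h0 := h.add_ne_zero ha ha0 hz
  have h1 := randersQuotient_mul_sq B hV h0
  rw [h.apply_add hB ha ha hz hz] at h1
  have h2 := h.nonpos z hz
  have h3 : 0 ≤ (1 - ‖V‖) * ‖a + z‖ := mul_nonneg (sub_pos.2 hV).le (norm_nonneg _)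
  calc c * ((1 - ‖V‖) * ‖a + z‖) ^ 2 ≤ c * randers V (a + z) ^ 2 := by
        gcongr; exact le_randers V _
    _ ≤ randersQuotient B V (a + z) * randers V (a + z) ^ 2 := by gcongr
    _ ≤ B a a := by linarith

theorem norm_le (h : IsPosSplitting B A N) (hB : B.IsSymm) (hV : ‖V‖ < 1) {c : ℝ}
    (hc : 0 < c) {a z : E} (ha : a ∈ A) (ha0 : a ≠ 0) (hz : z ∈ N)
    (hle : c ≤ randersQuotient B V (a + z)) :
    ‖a + z‖ ≤ √(B a a / c) / (1 - ‖V‖) := by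
  rw [le_div_iff₀ (sub_pos.2 hV), mul_comm]
  apply Real.le_sqrt_of_sq_le
  rw [le_div_iff₀ hc, mul_comm]
  exact h.mul_norm_sq_le hB hV hc ha ha0 hz hle

theorem randersQuotient_pos (h : IsPosSplitting B A N) (hV : ‖V‖ < 1) {a : E} (ha : a ∈ A)
    (ha0 : a ≠ 0) : 0 < randersQuotient B V a :=
  div_pos (h.pos a ha ha0) (pow_pos (randers_pos_s19 hV ha0) 2)

/-- Along a fibre `a + N` the quotient has at most one maximiser. -/
theorem eq_of_isMax (h : IsPosSplitting B A N) (hB : B.IsSymm) (hV : ‖V‖ < 1) {a z z' : E}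
    (ha : a ∈ A) (ha0 : a ≠ 0) (hz : z ∈ N) (hz' : z' ∈ N)
    (hmax : ∀ y ∈ N, randersQuotient B V (a + y) ≤ randersQuotient B V (a + z))
    (heq : randersQuotient B V (a + z') = randersQuotient B V (a + z)) : z' = z := by
  by_contra hne
  have hc : 0 < randersQuotient B V (a + z) := by
    simpa using (h.randersQuotient_pos hV ha ha0).trans_le (by simpa using hmax 0 N.zero_mem)
  have hx := h.add_ne_zero ha ha0 hz
  have hx' := h.add_ne_zero ha ha0 hz'
  have hray : ¬SameRay ℝ (a + z) (a + z') := by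
    intro hs
    obtain ⟨r, s, hr, hs, hrs⟩ := hs.exists_pos hx hx'
    rw [smul_add, smul_add] at hrs
    have h1 := h.left_eq_of_add_eq (A.smul_mem r ha) (A.smul_mem s ha) (N.smul_mem r hz)
      (N.smul_mem s hz') hrs
    have h2 : r = s := smul_left_injective ℝ ha0 h1
    subst h2
    exact hne (smul_right_injective E hr.ne' (add_left_cancel hrs)).symm
  have hlt := randers_add_lt (V := V) hray
  have hsum : (a + z) + (a + z') = (2 : ℝ) • (a + (2⁻¹ : ℝ) • (z + z')) := by
    module
  have hmid := hmax _ (N.smul_mem (2⁻¹ : ℝ) (N.add_mem hz hz'))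
  rw [← randersQuotient_smul B V _ two_pos, ← hsum] at hmid
  have hsum0 : (a + z) + (a + z') ≠ 0 := by
    rw [hsum]
    exact smul_ne_zero two_ne_zero
      (h.add_ne_zero ha ha0 (N.smul_mem (2⁻¹ : ℝ) (N.add_mem hz hz')))
  have e1 := randersQuotient_mul_sq B hV hx
  have e2 := randersQuotient_mul_sq B hV hx'
  have e3 := randersQuotient_mul_sq B hV hsum0
  have p1 := randers_pos_s19 hV hx
  have p2 := randers_pos_s19 hV hx'
  have p3 := randers_pos_s19 hV hsum0
  rw [heq] at e2
  have hneg := h.nonpos (z - z') (N.sub_mem hz hz')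
  have hexp : B ((a + z) + (a + z')) ((a + z) + (a + z')) =
      B (a + z) (a + z) + B (a + z') (a + z') + 2 * (B a a + B z z') := by
    rw [← h.apply_add hB ha ha hz hz', LinearMap.BilinForm.add_left,
      LinearMap.BilinForm.add_right (a + z) (a + z), LinearMap.BilinForm.add_right (a + z') (a + z),
      hB.eq (a + z') (a + z)]
    ring
  have hsub : B (z - z') (z - z') = B z z + B z' z' - 2 * B z z' := by
    simp [hB.eq z' z]; ring
  have k1 := h.apply_add hB ha ha hz hz
  have k2 := h.apply_add hB ha ha hz' hz'
  have u1 : randersQuotient B V (a + z + (a + z')) * randers V (a + z + (a + z')) ^ 2 ≤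
      randersQuotient B V (a + z) * randers V (a + z + (a + z')) ^ 2 := by gcongr
  have u2 : randersQuotient B V (a + z) * randers V (a + z + (a + z')) ^ 2 <
      randersQuotient B V (a + z) * (randers V (a + z) + randers V (a + z')) ^ 2 := by gcongr
  have u3 : 0 ≤ randersQuotient B V (a + z) * (randers V (a + z) - randers V (a + z')) ^ 2 := by
    positivity
  linarith

end IsPosSplitting

variable [FiniteDimensional ℝ E]

theorem contDiff_bilinForm_self (B : LinearMap.BilinForm ℝ E) :
    ContDiff ℝ 1 fun x => B x x := by
  have h : ∀ x, B x x = (LinearMap.toContinuousBilinearMap B) x x := fun _ => rfl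
  simp only [h]
  fun_prop

theorem fderiv_bilinForm_self_apply (B : LinearMap.BilinForm ℝ E) (hB : B.IsSymm) (x w : E) :
    fderiv ℝ (fun x => B x x) x w = 2 * B x w := by
  have h : HasFDerivAt (fun y => B y y) _ x :=
    (LinearMap.toContinuousBilinearMap B).hasFDerivAt.clm_apply (hasFDerivAt_id x)
  rw [h.fderiv]
  simp [hB.eq w x, two_mul]

theorem contDiffAt_randersQuotient (B : LinearMap.BilinForm ℝ E) {V x : E} (hV : ‖V‖ < 1)
    (hx : x ≠ 0) : ContDiffAt ℝ 1 (randersQuotient B V) x :=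
  (contDiff_bilinForm_self B).contDiffAt.div ((contDiffAt_randers V hx).pow 2)
    (pow_pos (randers_pos_s19 hV hx) 2).ne'

theorem norm_mul_bilinForm_of_fderiv_randersQuotient_eq_zero (B : LinearMap.BilinForm ℝ E)
    (hB : B.IsSymm) {V x : E} (hV : ‖V‖ < 1) (hx : x ≠ 0)
    (hcrit : fderiv ℝ (randersQuotient B V) x = 0) (w : E) :
    ‖x‖ * B x w = randersQuotient B V x * randers V x * inner ℝ (x + ‖x‖ • V) w := by
  have hQ := ((contDiffAt_randersQuotient B hV hx).differentiableAt one_ne_zero).hasFDerivAt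
  have hF := ((contDiffAt_randers V hx).differentiableAt one_ne_zero).hasFDerivAt
  have hprod := hQ.mul (hF.pow 2)
  have heq : (fun y => B y y) =ᶠ[𝓝 x] randersQuotient B V * randers V ^ 2 := by
    filter_upwards [isOpen_ne.mem_nhds hx] with y hy
    exact (randersQuotient_mul_sq B hV hy).symm
  have h := congrArg (fun D => D w) (hprod.congr_of_eventuallyEq heq).fderiv
  rw [← norm_mul_fderiv_randers V hx w]
  simp [fderiv_bilinForm_self_apply B hB, hcrit] at h
  linear_combination ‖x‖ / 2 * h

namespace IsPosSplitting

variable {B : LinearMap.BilinForm ℝ E} {A N : Submodule ℝ E} {V : E}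

theorem exists_isMax (h : IsPosSplitting B A N) (hB : B.IsSymm) (hV : ‖V‖ < 1) {a : E}
    (ha : a ∈ A) (ha0 : a ≠ 0) :
    ∃ z ∈ N, ∀ y ∈ N, randersQuotient B V (a + y) ≤ randersQuotient B V (a + z) := by
  have hcont : Continuous fun z : N => randersQuotient B V (a + z) := by
    rw [continuous_iff_continuousAt]
    intro z
    exact ContinuousAt.comp (f := fun z : N => a + (z : E))
      (contDiffAt_randersQuotient B hV (h.add_ne_zero ha ha0 z.2)).continuousAt
      (by fun_prop)
  obtain ⟨z, hz⟩ := hcont.exists_forall_ge_of_isBounded 0 (by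
    refine (Metric.isBounded_closedBall (x := (0 : N))
      (r := √(B a a / randersQuotient B V a) / (1 - ‖V‖) + ‖a‖)).subset fun z hz => ?_
    have h1 := h.norm_le hB hV (h.randersQuotient_pos hV ha ha0) ha ha0 z.2 (by simpa using hz)
    rw [mem_closedBall_zero_iff]
    have h2 := norm_sub_le (a + (z : E)) a
    rw [add_sub_cancel_left] at h2
    exact h2.trans (by gcongr))
  exact ⟨z, z.2, fun y hy => hz ⟨y, hy⟩⟩

/-- A point that maximises the quotient on its fibre and minimises the fibrewise maximum
is critical. -/
theorem fderiv_eq_zero_of_minimax (h : IsPosSplitting B A N) (hB : B.IsSymm) (hV : ‖V‖ < 1)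
    {a z : E} (ha : a ∈ A) (ha0 : a ≠ 0) (hz : z ∈ N)
    (hmax : ∀ y ∈ N, randersQuotient B V (a + y) ≤ randersQuotient B V (a + z))
    (hmin : ∀ a' ∈ A, a' ≠ 0 →
      ∃ y ∈ N, randersQuotient B V (a + z) ≤ randersQuotient B V (a' + y)) :
    fderiv ℝ (randersQuotient B V) (a + z) = 0 := by
  have hx := h.add_ne_zero ha ha0 hz
  have hc : 0 < randersQuotient B V (a + z) := by
    simpa using (h.randersQuotient_pos hV ha ha0).trans_le (by simpa using hmax 0 N.zero_mem)
  have hD := (contDiffAt_randersQuotient B hV hx).hasStrictFDerivAt one_ne_zero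
  set D := fderiv ℝ (randersQuotient B V) (a + z) with hDdef
  have hN : ∀ w ∈ N, D w = 0 := by
    intro w hw
    have hline : HasDerivAt (fun t : ℝ => a + z + t • w) w 0 := by
      simpa using ((hasDerivAt_id (0 : ℝ)).smul_const w).const_add (a + z)
    have hcomp : HasDerivAt (fun t : ℝ => randersQuotient B V (a + z + t • w)) (D w) 0 :=
      HasFDerivAt.comp_hasDerivAt (l := randersQuotient B V) (f := fun t : ℝ => a + z + t • w)
        (0 : ℝ) (by simpa using hD.hasFDerivAt) hline
    refine IsLocalMax.hasDerivAt_eq_zero (Eventually.of_forall fun t => ?_) hcomp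
    simpa [add_assoc] using hmax (z + t • w) (N.add_mem hz (N.smul_mem t hw))
  have hA : ∀ w ∈ A, 0 ≤ D w := by
    intro w hw
    have hs : Tendsto (fun n : ℕ => 1 / ((n : ℝ) + 1)) atTop (𝓝 0) :=
      tendsto_one_div_add_atTop_nhds_zero_nat
    have hlim : Tendsto (fun n : ℕ => a + (1 / ((n : ℝ) + 1)) • w) atTop (𝓝 a) := by
      simpa using (hs.smul_const w).const_add a
    have hev : ∀ᶠ n : ℕ in atTop, a + (1 / ((n : ℝ) + 1)) • w ≠ 0 :=
      hlim.eventually (isOpen_ne.mem_nhds ha0)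
    have hBev : ∀ᶠ n : ℕ in atTop, B (a + (1 / ((n : ℝ) + 1)) • w)
        (a + (1 / ((n : ℝ) + 1)) • w) ≤ B a a + 1 :=
      (((contDiff_bilinForm_self B).continuous.tendsto a).comp hlim).eventually
        (Iic_mem_nhds (lt_add_one _))
    obtain ⟨n₀, hn₀⟩ := eventually_atTop.1 (hev.and hBev)
    set s : ℕ → ℝ := fun n => 1 / (((n + n₀ : ℕ) : ℝ) + 1) with hsdef
    have hs0 : Tendsto s atTop (𝓝 0) := hs.comp (tendsto_add_atTop_nat n₀)
    have hspos : ∀ n, 0 < s n := fun n => Nat.one_div_pos_of_nat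
    have hmem : ∀ n, a + s n • w ∈ A := fun n => A.add_mem ha (A.smul_mem _ hw)
    have hne : ∀ n, a + s n • w ≠ 0 := fun n => (hn₀ (n + n₀) (Nat.le_add_left _ _)).1
    have hBle : ∀ n, B (a + s n • w) (a + s n • w) ≤ B a a + 1 :=
      fun n => (hn₀ (n + n₀) (Nat.le_add_left _ _)).2
    choose y hyN hy using fun n => hmin _ (hmem n) (hne n)
    have hbdd : ∀ n, a + s n • w + y n ∈ Metric.closedBall (0 : E)
        (√((B a a + 1) / randersQuotient B V (a + z)) / (1 - ‖V‖)) := by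
      intro n
      rw [mem_closedBall_zero_iff]
      refine (h.norm_le hB hV hc (hmem n) (hne n) (hyN n) (hy n)).trans ?_
      have := sub_pos.2 hV
      gcongr
      exact hBle n
    obtain ⟨x, -, φ, hφ, hxlim⟩ := tendsto_subseq_of_bounded Metric.isBounded_closedBall hbdd
    have hsφ : Tendsto (fun n => s (φ n)) atTop (𝓝 0) := hs0.comp hφ.tendsto_atTop
    have hlimφ : Tendsto (fun n => a + s (φ n) • w) atTop (𝓝 a) := by
      simpa using (hsφ.smul_const w).const_add a
    have hylim : Tendsto (fun n => y (φ n)) atTop (𝓝 (x - a)) := by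
      simpa using hxlim.sub hlimφ
    have hyN' : x - a ∈ N := N.closed_of_finiteDimensional.mem_of_tendsto hylim
      (Eventually.of_forall fun n => hyN (φ n))
    have hxa : a + (x - a) = x := add_sub_cancel a x
    have hx0 : x ≠ 0 := hxa ▸ h.add_ne_zero ha ha0 hyN'
    have hge : randersQuotient B V (a + z) ≤ randersQuotient B V x :=
      ge_of_tendsto ((contDiffAt_randersQuotient B hV hx0).continuousAt.tendsto.comp hxlim)
        (Eventually.of_forall fun n => hy (φ n))
    have hzeq : x - a = z := h.eq_of_isMax hB hV ha ha0 hz hyN' hmax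
      (le_antisymm (hmax _ hyN') (by rwa [hxa]))
    rw [hzeq] at hylim
    have hpair : Tendsto (fun n => (a + s (φ n) • w + y (φ n), a + y (φ n))) atTop
        (𝓝 (a + z, a + z)) :=
      (hlimφ.add hylim).prodMk_nhds (hylim.const_add a)
    have hlittle := (hD.isLittleO.comp_tendsto hpair)
    by_contra! hneg
    have hwpos : 0 < ‖w‖ := norm_pos_iff.2 (by rintro rfl; simp at hneg)
    have hev' := hlittle.def (c := -D w / (2 * ‖w‖)) (by
      apply div_pos <;> linarith)
    obtain ⟨n, hn⟩ := hev'.exists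
    have hsn := hspos (φ n)
    have hdiff : a + s (φ n) • w + y (φ n) - (a + y (φ n)) = s (φ n) • w := by abel
    simp only [Function.comp_apply, hdiff, map_smul, smul_eq_mul, norm_smul, Real.norm_eq_abs,
      abs_of_pos hsn] at hn
    have hbound : -D w / (2 * ‖w‖) * (s (φ n) * ‖w‖) = s (φ n) * (-D w / 2) := by
      field_simp
    rw [hbound] at hn
    have h1 := hy (φ n)
    have h2 := hmax _ (hyN (φ n))
    have h3 := (abs_le.1 hn).2
    nlinarith
  have hA' : ∀ w ∈ A, D w = 0 := fun w hw => by
    have h1 := hA w hw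
    have h2 := hA (-w) (A.neg_mem hw)
    rw [map_neg] at h2
    linarith
  ext w
  obtain ⟨b, hb, y, hy, rfl⟩ := Submodule.mem_sup.1
    (h.sup_eq_top ▸ Submodule.mem_top : w ∈ A ⊔ N)
  simp [hA' b hb, hN y hy]

/-- A fibre on which the fibrewise maximum of the quotient is minimal exists. -/
theorem exists_minimax (h : IsPosSplitting B A N) (hB : B.IsSymm) (hV : ‖V‖ < 1) (hA : A ≠ ⊥) :
    ∃ a ∈ A, a ≠ 0 ∧ ∃ z ∈ N,
      (∀ y ∈ N, randersQuotient B V (a + y) ≤ randersQuotient B V (a + z)) ∧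
      ∀ a' ∈ A, a' ≠ 0 → ∃ y ∈ N, randersQuotient B V (a + z) ≤ randersQuotient B V (a' + y) := by
  choose! f hfN hf using fun (a : E) (ha : a ∈ A ∧ a ≠ 0) => h.exists_isMax hB hV ha.1 ha.2
  have hcompact : IsCompact ((A : Set E) ∩ Metric.sphere 0 1) :=
    (isCompact_sphere 0 1).inter_left A.closed_of_finiteDimensional
  have hne : ∀ a ∈ (A : Set E) ∩ Metric.sphere 0 1, a ∈ A ∧ a ≠ 0 := fun a ha =>
    ⟨ha.1, Metric.ne_of_mem_sphere ha.2 one_ne_zero⟩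
  have hnormalize : ∀ a ∈ A, a ≠ 0 → ‖a‖⁻¹ • a ∈ (A : Set E) ∩ Metric.sphere 0 1 :=
    fun a ha ha0 => ⟨A.smul_mem _ ha, by simp [norm_smul, ha0]⟩
  obtain ⟨b, hb, hb0⟩ := A.ne_bot_iff.1 hA
  have hlsc : LowerSemicontinuousOn (fun a => randersQuotient B V (a + f a))
      ((A : Set E) ∩ Metric.sphere 0 1) := by
    intro a ha c hc
    obtain ⟨haA, ha0⟩ := hne a ha
    have hcont : ContinuousAt (fun a' => randersQuotient B V (a' + f a)) a :=
      ContinuousAt.comp (f := fun a' => a' + f a) (contDiffAt_randersQuotient B hV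
        (h.add_ne_zero haA ha0 (hfN a ⟨haA, ha0⟩))).continuousAt (by fun_prop)
    filter_upwards [nhdsWithin_le_nhds (hcont.eventually (Ioi_mem_nhds hc)),
      self_mem_nhdsWithin] with a' ha' hmem
    exact lt_of_lt_of_le ha' (hf a' (hne a' hmem) _ (hfN a ⟨haA, ha0⟩))
  obtain ⟨a, ha, hmin⟩ := hlsc.exists_isMinOn ⟨_, hnormalize b hb hb0⟩ hcompact
  refine ⟨a, ha.1, (hne a ha).2, f a, hfN a (hne a ha), hf a (hne a ha), fun a' ha' ha0' => ?_⟩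
  have hmem := hnormalize a' ha' ha0'
  have hpos : 0 < ‖a'‖ := norm_pos_iff.2 ha0'
  refine ⟨‖a'‖ • f (‖a'‖⁻¹ • a'), N.smul_mem _ (hfN _ (hne _ hmem)), (hmin hmem).trans_eq ?_⟩
  simp only
  rw [← randersQuotient_smul B V _ hpos, smul_add, smul_inv_smul₀ hpos.ne']

end IsPosSplitting

theorem exists_isMax_randersQuotient [Nontrivial E] (B : LinearMap.BilinForm ℝ E) {V : E}
    (hV : ‖V‖ < 1) :
    ∃ x : E, x ≠ 0 ∧ ∀ y, y ≠ 0 → randersQuotient B V y ≤ randersQuotient B V x := by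
  obtain ⟨x, hx, hmax⟩ := (isCompact_sphere (0 : E) 1).exists_isMaxOn
    (NormedSpace.sphere_nonempty.2 zero_le_one) (f := randersQuotient B V) fun x hx =>
      (contDiffAt_randersQuotient B hV
        (Metric.ne_of_mem_sphere hx one_ne_zero)).continuousAt.continuousWithinAt
  refine ⟨x, Metric.ne_of_mem_sphere hx one_ne_zero, fun y hy => ?_⟩
  rw [← randersQuotient_smul B V y (inv_pos.2 (norm_pos_iff.2 hy))]
  exact hmax (by simp [norm_smul, hy])

/-- The quotient of a quadratic form with a positive value by the square of a Randers norm has at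
least two critical rays with positive critical value. -/
theorem exists_two_critical_randersQuotient (B : LinearMap.BilinForm ℝ E) (hB : B.IsSymm) {V : E}
    (hV : ‖V‖ < 1) {x₀ : E} (hx₀ : 0 < B x₀ x₀) :
    ∃ x y : E, (0 < randersQuotient B V x ∧ x ≠ 0 ∧ fderiv ℝ (randersQuotient B V) x = 0) ∧
      (0 < randersQuotient B V y ∧ y ≠ 0 ∧ fderiv ℝ (randersQuotient B V) y = 0) ∧
      ∀ t : ℝ, 0 < t → x ≠ t • y := by
  have hx₀0 : x₀ ≠ 0 := by rintro rfl; simp at hx₀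
  have : Nontrivial E := nontrivial_of_ne x₀ 0 hx₀0
  obtain ⟨A, N, h⟩ := exists_isPosSplitting B hB
  have hA : A ≠ ⊥ := by
    rintro rfl
    have htop := h.sup_eq_top
    rw [bot_sup_eq] at htop
    exact hx₀.not_ge (h.nonpos x₀ (htop ▸ Submodule.mem_top))
  obtain ⟨x, hx0, hxmax⟩ := exists_isMax_randersQuotient B hV
  have hxpos : 0 < randersQuotient B V x :=
    (div_pos hx₀ (pow_pos (randers_pos_s19 hV hx₀0) 2)).trans_le (hxmax x₀ hx₀0)
  have hxcrit := fderiv_randersQuotient_eq_zero_of_isMax B hx0 hxmax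
  obtain ⟨a, ha, ha0, z, hz, hmax, hmin⟩ := h.exists_minimax hB hV hA
  have hypos : 0 < randersQuotient B V (a + z) := by
    simpa using (h.randersQuotient_pos hV ha ha0).trans_le (by simpa using hmax 0 N.zero_mem)
  by_cases hray : ∀ t : ℝ, 0 < t → x ≠ t • (a + z)
  · exact ⟨x, a + z, ⟨hxpos, hx0, hxcrit⟩, ⟨hypos, h.add_ne_zero ha ha0 hz,
      h.fderiv_eq_zero_of_minimax hB hV ha ha0 hz hmax hmin⟩, hray⟩
  · push Not at hray
    obtain ⟨t, ht, rfl⟩ := hray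
    rw [randersQuotient_smul B V _ ht] at hxmax
    obtain ⟨y, hy, hle⟩ := hmin (-a) (A.neg_mem ha) (neg_ne_zero.2 ha0)
    have hy0 := h.add_ne_zero (A.neg_mem ha) (neg_ne_zero.2 ha0) hy
    refine ⟨t • (a + z), -a + y, ⟨hxpos, hx0, hxcrit⟩, ⟨hypos.trans_le hle, hy0,
      fderiv_randersQuotient_eq_zero_of_isMax B hy0 fun w hw => (hxmax w hw).trans hle⟩, ?_⟩
    intro r hr heq
    rw [smul_add, smul_add] at heq
    have h1 := h.left_eq_of_add_eq (A.smul_mem t ha) (A.smul_mem r (A.neg_mem ha))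
      (N.smul_mem t hz) (N.smul_mem r hy) heq
    rw [smul_neg, ← neg_smul] at h1
    have h2 : t = -r := smul_left_injective ℝ ha0 h1
    linarith

/-- A symmetric bilinear form with a positive value is, on at least two rays in its positive cone,
proportional to the differential of the Randers norm. -/
theorem exists_two_proportional (B : LinearMap.BilinForm ℝ E) (hB : B.IsSymm) {V : E}
    (hV : ‖V‖ < 1) {x₀ : E} (hx₀ : 0 < B x₀ x₀) :
    ∃ x y : E, (0 < B x x ∧ ∃ c : ℝ, ∀ w, inner ℝ (x + ‖x‖ • V) w = c * B x w) ∧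
      (0 < B y y ∧ ∃ c : ℝ, ∀ w, inner ℝ (y + ‖y‖ • V) w = c * B y w) ∧
      ∀ t : ℝ, 0 < t → x ≠ t • y := by
  have key : ∀ x : E,
      0 < randersQuotient B V x ∧ x ≠ 0 ∧ fderiv ℝ (randersQuotient B V) x = 0 →
      0 < B x x ∧ ∃ c : ℝ, ∀ w, inner ℝ (x + ‖x‖ • V) w = c * B x w := by
    rintro x ⟨hpos, hx0, hcrit⟩
    have hF := randers_pos_s19 hV hx0
    refine ⟨?_, ‖x‖ / (randersQuotient B V x * randers V x), fun w => ?_⟩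
    · rw [← randersQuotient_mul_sq B hV hx0]
      positivity
    · rw [div_mul_eq_mul_div,
        norm_mul_bilinForm_of_fderiv_randersQuotient_eq_zero B hB hV hx0 hcrit w,
        mul_div_cancel_left₀ _ (mul_pos hpos hF).ne']
  obtain ⟨x, y, hx, hy, hxy⟩ := exists_two_critical_randersQuotient B hB hV hx₀
  exact ⟨x, y, key x hx, key y hy, hxy⟩

end Randers

theorem isGeodesicVector_of_proportional_killing {L : Type*} [LieRing L] [LieAlgebra ℝ L]
    (α : L →ₗ[ℝ] L →ₗ[ℝ] ℝ) {V X : L} (hX : X ≠ 0) {c : ℝ}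
    (h : ∀ w, α (X + √(α X X) • V) w = c * killingForm ℝ L X w) : IsGeodesicVector α V X := by
  refine ⟨hX, fun U => ?_⟩
  rw [h, ← LieModule.traceForm_apply_lie_apply]
  simp

/-- Version of `exists_two_proportional` for an inner product given as a bilinear form. -/
theorem exists_two_proportional_of_posDef {L : Type*} [AddCommGroup L] [Module ℝ L]
    [FiniteDimensional ℝ L] (B : LinearMap.BilinForm ℝ L) (hB : B.IsSymm)
    (α : L →ₗ[ℝ] L →ₗ[ℝ] ℝ) (hsymm : ∀ x y, α x y = α y x) (hpos : ∀ x, x ≠ 0 → 0 < α x x)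
    {V : L} (hV : α V V < 1) {x₀ : L} (hx₀ : 0 < B x₀ x₀) :
    ∃ x y : L, (0 < B x x ∧ ∃ c : ℝ, ∀ w, α (x + √(α x x) • V) w = c * B x w) ∧
      (0 < B y y ∧ ∃ c : ℝ, ∀ w, α (y + √(α y y) • V) w = c * B y w) ∧
      ∀ t : ℝ, 0 < t → x ≠ t • y := by
  let core : InnerProductSpace.Core ℝ L :=
    { inner := fun x y => α x y
      conj_inner_symm := fun x y => hsymm y x
      re_inner_nonneg := fun x => by
        by_cases hx : x = 0
        · simp [hx]
        · exact (hpos x hx).le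
      add_left := fun x y z => by simp
      smul_left := fun x y r => by simp
      definite := fun x hx => by
        by_contra hx0
        exact (hpos x hx0).ne' hx }
  let : NormedAddCommGroup L := core.toNormedAddCommGroup
  let : InnerProductSpace ℝ L := InnerProductSpace.ofCore core.toCore
  have hnorm : ‖V‖ < 1 := by
    change √(α V V) < 1
    rwa [Real.sqrt_lt' one_pos, one_pow]
  exact exists_two_proportional B hB hnorm hx₀

/-- if the Killing form of a finite-dimensional real Lie algebra
is indefinite, then for any inner product α and vector V with α(V,V) < 1 there
exist at least four geodesic vectors for (α, V) such that no one of them is a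
positive scalar multiple of another. -/
theorem exists_four_geodesic_vectors_of_indefinite_killing
    (L : Type*) [LieRing L] [LieAlgebra ℝ L] [FiniteDimensional ℝ L]
    (Yplus Yminus : L)
    (hplus : 0 < killing L Yplus Yplus)
    (hminus : killing L Yminus Yminus < 0)
    (α : L →ₗ[ℝ] L →ₗ[ℝ] ℝ)
    (hsymm : ∀ x y, α x y = α y x)
    (hpos : ∀ x, x ≠ 0 → 0 < α x x)
    (V : L) (hV : α V V < 1) :
    ∃ X : Fin 4 → L,
      (∀ i, IsGeodesicVector α V (X i)) ∧
      ∀ i j, i ≠ j → ∀ t : ℝ, 0 < t → X i ≠ t • X j := by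
  have hK : (killingForm ℝ L).IsSymm := ⟨LieModule.traceForm_comm ℝ L L⟩
  have hK' : (-killingForm ℝ L).IsSymm := hK.neg
  obtain ⟨x, y, ⟨hx, c, hc⟩, ⟨hy, d, hd⟩, hxy⟩ :=
    exists_two_proportional_of_posDef (killingForm ℝ L) hK α hsymm hpos hV (x₀ := Yplus) hplus
  obtain ⟨x', y', ⟨hx', c', hc'⟩, ⟨hy', d', hd'⟩, hxy'⟩ :=
    exists_two_proportional_of_posDef (-killingForm ℝ L) hK' α hsymm hpos hV (x₀ := Yminus)
      (neg_pos.2 hminus)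
  simp only [LinearMap.neg_apply, neg_pos] at hx' hy' hc' hd'
  have hswap : ∀ {u v : L}, (∀ t : ℝ, 0 < t → u ≠ t • v) → ∀ t : ℝ, 0 < t → v ≠ t • u := by
    rintro u v h t ht rfl
    exact h t⁻¹ (inv_pos.2 ht) (inv_smul_smul₀ ht.ne' u).symm
  have hcone : ∀ {u v : L}, 0 < killingForm ℝ L u u → killingForm ℝ L v v < 0 →
      ∀ t : ℝ, 0 < t → u ≠ t • v := by
    rintro u v hu hv t ht rfl
    simp only [map_smul, LinearMap.smul_apply, smul_eq_mul] at hu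
    nlinarith [mul_pos ht ht]
  have hne : ∀ {u : L}, killingForm ℝ L u u ≠ 0 → u ≠ 0 := by
    rintro u hu rfl
    simp at hu
  refine ⟨![x, y, x', y'], ?_, ?_⟩
  · intro i
    fin_cases i
    · exact isGeodesicVector_of_proportional_killing α (hne hx.ne') hc
    · exact isGeodesicVector_of_proportional_killing α (hne hy.ne') hd
    · exact isGeodesicVector_of_proportional_killing α (hne hx'.ne) (c := -c')
        fun w => (hc' w).trans (by simp)
    · exact isGeodesicVector_of_proportional_killing α (hne hy'.ne) (c := -d')
        fun w => (hd' w).trans (by simp)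
  · intro i j hij
    fin_cases i <;> fin_cases j
    all_goals first
      | exact absurd rfl hij
      | exact hxy
      | exact hxy'
      | exact hswap hxy
      | exact hswap hxy'
      | exact hcone (by assumption) (by assumption)
      | exact hswap (hcone (by assumption) (by assumption))
end
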